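/- arXiv:2108.04544 — 9 statements merged into one kernel-verified Lean document; each statement's English description precedes it below -/
import Mathlib

section
/- Let R be a commutative ring equipped with a ring endomorphism σ : R → R. Suppose X and Y are nonempty, disjoint, Zariski-closed subsets of Spec R with X ∪ Y = Spec R, and each of X and Y is stable under the map p ↦ σ⁻¹(p). Then there exists an idempotent e ∈ R with σ(e) = e, e ≠ 0, e ≠ 1, such that X = V(e) and Y = V(1−e). -/
/-- If `Spec R` decomposes as a disjoint union of two nonempty Zariski-closed
subsets `X`, `Y`, each stable under `p ↦ σ⁻¹(p)`, then there is a nontrivial constant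
idempotent `e ∈ R` with `X = V(e)` and `Y = V(1-e)`. -/
theorem stmt1 {R : Type*} [CommRing R] (σ : R →+* R)
    (X Y : Set (PrimeSpectrum R))
    (hXne : X.Nonempty) (hYne : Y.Nonempty)
    (hdisj : Disjoint X Y) (hunion : X ∪ Y = Set.univ)
    (hXclosed : IsClosed X) (hYclosed : IsClosed Y)
    (hXinv : ∀ p ∈ X, PrimeSpectrum.comap σ p ∈ X)
    (hYinv : ∀ p ∈ Y, PrimeSpectrum.comap σ p ∈ Y) :
    ∃ e : R, σ e = e ∧ e * e = e ∧ e ≠ 0 ∧ e ≠ 1 ∧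
      X = PrimeSpectrum.zeroLocus ({e} : Set R) ∧
      Y = PrimeSpectrum.zeroLocus ({1 - e} : Set R) := by
  have hXY : ∀ p, p ∈ X ↔ p ∉ Y := by
    intro p
    constructor
    · intro h h'
      exact Set.disjoint_left.mp hdisj h h'
    · intro h
      have : p ∈ X ∪ Y := hunion ▸ Set.mem_univ p
      exact this.resolve_right h
  have hXc : X = Yᶜ := by
    ext p
    exact hXY p
  have hYo : IsOpen Y := by
    rw [← isClosed_compl_iff, ← hXc]
    exact hXclosed
  obtain ⟨e, he, hYe⟩ :=
    PrimeSpectrum.exists_idempotent_basicOpen_eq_of_isClopen ⟨hYclosed, hYo⟩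
  have hY : ∀ p, p ∈ Y ↔ e ∉ p.asIdeal := by
    intro p
    rw [hYe]
    rfl
  have hX : ∀ p, p ∈ X ↔ e ∈ p.asIdeal := by
    intro p
    rw [hXY, hY, not_not]
  refine ⟨e, ?_, he, ?_, ?_, ?_, ?_⟩
  · refine PrimeSpectrum.basicOpen_injOn_isIdempotentElem (he.map σ) he ?_
    ext p
    change σ e ∉ p.asIdeal ↔ e ∉ p.asIdeal
    constructor
    · intro h h'
      exact h ((hX _).1 (hXinv p ((hX p).2 h')))
    · intro h h'
      exact (hY _).1 (hYinv p ((hY p).2 h)) h'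
  · rintro rfl
    obtain ⟨p, hp⟩ := hYne
    exact (hY p).1 hp p.asIdeal.zero_mem
  · rintro rfl
    obtain ⟨p, hp⟩ := hXne
    exact p.2.one_notMem ((hX p).1 hp)
  · ext p
    rw [hX, PrimeSpectrum.mem_zeroLocus, Set.singleton_subset_iff]
    rfl
  · ext p
    rw [hY, PrimeSpectrum.mem_zeroLocus, Set.singleton_subset_iff]
    change _ ↔ 1 - e ∈ p.asIdeal
    constructor
    · intro h
      have h0 : e * (1 - e) ∈ p.asIdeal := by
        rw [mul_sub, mul_one, he.eq, sub_self]
        exact p.asIdeal.zero_mem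
      exact (p.2.mem_or_mem h0).resolve_left h
    · intro h h'
      apply p.2.one_notMem
      have := p.asIdeal.add_mem h h'
      rwa [sub_add_cancel] at this
end

section
/- Let R be a commutative ring equipped with a ring endomorphism σ : R → R, and let e₁, …, eₙ ∈ R be nonzero constant idempotents (σ(eᵢ) = eᵢ, eᵢ² = eᵢ) that are pairwise orthogonal (eᵢej = 0 for i ≠ j) with e₁ + ⋯ + eₙ = 1, and such that no eᵢ can be written as a sum a + b of two nonzero constant orthogonal idempotents a, b (a² = a, b² = b, σ(a) = a, σ(b) = b, ab = 0). Then the sets V(1−e₁), …, V(1−eₙ) are pairwise disjoint, nonempty, their union is Spec R, each is Zariski-closed and stable under p ↦ σ⁻¹(p), and each V(1−eᵢ) is σ-connected, i.e. V(1−eᵢ) cannot be written as a disjoint union of two nonempty subsets that are Zariski-closed in Spec R and stable under p ↦ σ⁻¹(p). -/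
theorem aux_mem {R : Type*} [CommRing R] (e : R) (he : e * e = e) (p : PrimeSpectrum R) :
    p ∈ PrimeSpectrum.zeroLocus ({1 - e} : Set R) ↔ e ∉ p.asIdeal := by
  rw [PrimeSpectrum.mem_zeroLocus, Set.singleton_subset_iff, SetLike.mem_coe]
  constructor
  · intro h h'
    apply p.isPrime.ne_top
    rw [Ideal.eq_top_iff_one]
    have := add_mem h h'
    simpa using this
  · intro h
    have h0 : e * (1 - e) ∈ p.asIdeal := by
      have : e * (1 - e) = 0 := by rw [mul_sub, he]; simp
      rw [this]; exact zero_mem _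
    exact (p.isPrime.mem_or_mem h0).resolve_left h

theorem aux_ext {R : Type*} [CommRing R] (x y : R) (hx : x * x = x) (hy : y * y = y)
    (h : ∀ p : PrimeSpectrum R, x ∉ p.asIdeal ↔ y ∉ p.asIdeal) : x = y := by
  apply PrimeSpectrum.basicOpen_injOn_isIdempotentElem (R := R) hx hy
  ext p
  exact h p

theorem aux_clopen {R : Type*} [CommRing R] (e : R) (he : e * e = e)
    (X Y : Set (PrimeSpectrum R)) (hd : Disjoint X Y)
    (hu : X ∪ Y = PrimeSpectrum.zeroLocus ({1 - e} : Set R)) (hX : IsClosed X)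
    (hY : IsClosed Y) : ∃ a : R, a * a = a ∧ ∀ p : PrimeSpectrum R, p ∈ X ↔ a ∉ p.asIdeal := by
  have hu' : ∀ p : PrimeSpectrum R, p ∈ X ∨ p ∈ Y ↔ e ∉ p.asIdeal := by
    intro p
    rw [← aux_mem e he, ← hu]; rfl
  have hc : Xᶜ = Y ∪ PrimeSpectrum.zeroLocus ({e} : Set R) := by
    ext p
    have h1 := hu' p
    have h2 : p ∈ X → p ∉ Y := fun h h' => Set.disjoint_left.mp hd h h'
    rw [Set.mem_compl_iff, Set.mem_union, PrimeSpectrum.mem_zeroLocus,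
      Set.singleton_subset_iff, SetLike.mem_coe]
    tauto
  have hcl : IsClopen X := by
    refine ⟨hX, ?_⟩
    rw [← isClosed_compl_iff, hc]
    exact hY.union (PrimeSpectrum.isClosed_zeroLocus _)
  obtain ⟨a, ha, h⟩ := PrimeSpectrum.exists_idempotent_basicOpen_eq_of_isClopen hcl
  exact ⟨a, ha, fun p => by rw [h]; rfl⟩

theorem aux_const {R : Type*} [CommRing R] (σ : R →+* R) (e : R) (he : e * e = e)
    (hσ : σ e = e)
    (X Y : Set (PrimeSpectrum R)) (hd : Disjoint X Y)
    (hu : X ∪ Y = PrimeSpectrum.zeroLocus ({1 - e} : Set R))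
    (hX : ∀ p ∈ X, PrimeSpectrum.comap σ p ∈ X)
    (hY : ∀ p ∈ Y, PrimeSpectrum.comap σ p ∈ Y)
    (a : R) (ha : a * a = a) (h : ∀ p : PrimeSpectrum R, p ∈ X ↔ a ∉ p.asIdeal) :
    σ a = a := by
  have hu' : ∀ p : PrimeSpectrum R, p ∈ X ∨ p ∈ Y ↔ e ∉ p.asIdeal := by
    intro p
    rw [← aux_mem e he, ← hu]; rfl
  apply aux_ext _ _ (by rw [← map_mul, ha]) ha
  intro p
  have h0 : PrimeSpectrum.comap σ p ∈ X ↔ σ a ∉ p.asIdeal := h _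
  have h3 : PrimeSpectrum.comap σ p ∈ X ∨ PrimeSpectrum.comap σ p ∈ Y ↔ σ e ∉ p.asIdeal := hu' _
  rw [hσ] at h3
  have h2 : PrimeSpectrum.comap σ p ∈ X → PrimeSpectrum.comap σ p ∉ Y :=
    fun h h' => Set.disjoint_left.mp hd h h'
  have := hX p
  have := hY p
  have := hu' p
  rw [← h0, ← h p]
  tauto

/-- If `e₁, …, eₙ` are nonzero constant orthogonal idempotents summing to `1`
such that no `eᵢ` splits as a sum of two nonzero constant orthogonal idempotents, then the
sets `V(1-eᵢ)` are the σ-connected components of `Spec R`: they are pairwise disjoint,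
nonempty, cover `Spec R`, are Zariski-closed and stable under `p ↦ σ⁻¹(p)`, and each is
σ-connected. -/
theorem stmt3 {R : Type*} [CommRing R] (σ : R →+* R) (n : ℕ) (e : Fin n → R)
    (hconst : ∀ i, σ (e i) = e i)
    (hidem : ∀ i, e i * e i = e i)
    (hne : ∀ i, e i ≠ 0)
    (horth : ∀ i j, i ≠ j → e i * e j = 0)
    (hsum : ∑ i, e i = 1)
    (hnosplit : ∀ i, ¬ ∃ a b : R, a ≠ 0 ∧ b ≠ 0 ∧ a * a = a ∧ b * b = b ∧
      σ a = a ∧ σ b = b ∧ a * b = 0 ∧ e i = a + b) :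
    (∀ i j, i ≠ j →
      Disjoint (PrimeSpectrum.zeroLocus ({1 - e i} : Set R))
        (PrimeSpectrum.zeroLocus ({1 - e j} : Set R))) ∧
    (∀ i, (PrimeSpectrum.zeroLocus ({1 - e i} : Set R)).Nonempty) ∧
    (⋃ i, PrimeSpectrum.zeroLocus ({1 - e i} : Set R)) = Set.univ ∧
    (∀ i, IsClosed (PrimeSpectrum.zeroLocus ({1 - e i} : Set R))) ∧
    (∀ i, ∀ p ∈ PrimeSpectrum.zeroLocus ({1 - e i} : Set R),
      PrimeSpectrum.comap σ p ∈ PrimeSpectrum.zeroLocus ({1 - e i} : Set R)) ∧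
    (∀ i, ¬ ∃ X Y : Set (PrimeSpectrum R),
      X.Nonempty ∧ Y.Nonempty ∧ Disjoint X Y ∧
      X ∪ Y = PrimeSpectrum.zeroLocus ({1 - e i} : Set R) ∧
      IsClosed X ∧ IsClosed Y ∧
      (∀ p ∈ X, PrimeSpectrum.comap σ p ∈ X) ∧
      (∀ p ∈ Y, PrimeSpectrum.comap σ p ∈ Y)) := by
  refine ⟨?_, ?_, ?_, fun i => PrimeSpectrum.isClosed_zeroLocus _, ?_, ?_⟩
  · intro i j hij
    rw [Set.disjoint_left]
    intro p hi hj
    rw [aux_mem _ (hidem _)] at hi hj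
    have : e i * e j ∈ p.asIdeal := by rw [horth i j hij]; exact zero_mem _
    exact (p.isPrime.mem_or_mem this).elim hi hj
  · intro i
    by_contra hcon
    apply hne i
    apply aux_ext _ _ (hidem i) (by simp)
    intro p
    constructor
    · intro h
      exact absurd ⟨p, (aux_mem _ (hidem i) p).2 h⟩ hcon
    · intro h
      exact absurd (zero_mem _) h
  · rw [Set.eq_univ_iff_forall]
    intro p
    by_contra hcon
    rw [Set.mem_iUnion] at hcon
    push Not at hcon
    apply p.isPrime.ne_top
    rw [Ideal.eq_top_iff_one, ← hsum]
    apply sum_mem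
    intro i _
    have := hcon i
    rw [aux_mem _ (hidem i)] at this
    exact not_not.mp this
  · intro i p hp
    rw [aux_mem _ (hidem i)] at hp ⊢
    intro h
    have h' : σ (e i) ∈ p.asIdeal := h
    rw [hconst] at h'
    exact hp h'
  · rintro i ⟨X, Y, ⟨x, hx⟩, ⟨y, hy⟩, hd, hu, hX, hY, hsX, hsY⟩
    have hu2 : Y ∪ X = PrimeSpectrum.zeroLocus ({1 - e i} : Set R) := by
      rw [Set.union_comm]; exact hu
    obtain ⟨a, ha, haX⟩ := aux_clopen (e i) (hidem i) X Y hd hu hX hY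
    obtain ⟨b, hb, hbY⟩ := aux_clopen (e i) (hidem i) Y X hd.symm hu2 hY hX
    have hab : a * b = 0 := by
      apply aux_ext _ _ (by rw [mul_mul_mul_comm, ha, hb]) (by simp)
      intro p
      constructor
      · intro h
        exfalso
        exact Set.disjoint_left.mp hd ((haX p).2 fun h' => h (Ideal.mul_mem_right _ _ h'))
          ((hbY p).2 fun h' => h (Ideal.mul_mem_left _ _ h'))
      · intro h
        exact absurd (zero_mem _) h
    refine hnosplit i ⟨a, b, ?_, ?_, ha, hb,
      aux_const σ (e i) (hidem i) (hconst i) X Y hd hu hsX hsY a ha haX,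
      aux_const σ (e i) (hidem i) (hconst i) Y X hd.symm hu2 hsY hsX b hb hbY, hab, ?_⟩
    · rintro rfl
      exact (haX x).1 hx (zero_mem _)
    · rintro rfl
      exact (hbY y).1 hy (zero_mem _)
    · apply aux_ext _ _ (hidem i) (by linear_combination ha + hb + 2 * hab)
      intro p
      rw [← aux_mem _ (hidem i), ← hu, Set.mem_union, haX, hbY, ← not_and_or, not_iff_not]
      constructor
      · rintro ⟨h1, h2⟩
        exact add_mem h1 h2
      · intro h
        constructor
        · have : a = a * (a + b) := by linear_combination -ha - hab
          rw [this]; exact Ideal.mul_mem_left _ _ h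
        · have : b = b * (a + b) := by linear_combination -hb - hab
          rw [this]; exact Ideal.mul_mem_left _ _ h
end

section
/- Let R be a commutative ring equipped with a ring endomorphism σ : R → R. Let d₁, …, d_m ∈ R be pairwise distinct nonzero idempotents that are pairwise orthogonal (d_j d_l = 0 for j ≠ l), satisfy d₁ + ⋯ + d_m = 1, and are primitive in the sense that no d_j is a sum of two nonzero orthogonal idempotents. Assume σ permutes the d_j, i.e. there is a permutation τ of {1, …, m} with σ(d_j) = d_{τ(j)} for all j. For each orbit A of τ on {1, …, m} set e_A = Σ_{j∈A} d_j. Then the elements e_A (A ranging over the orbits of τ) are idempotents fixed by σ, pairwise orthogonal, their sum is 1, and no e_A can be written as a sum a + b of two nonzero orthogonal idempotents a, b with σ(a) = a and σ(b) = b. -/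
/-- Let `d₁, …, d_m` be the (pairwise distinct, pairwise orthogonal,
primitive) nonzero idempotents of `R` summing to `1`, permuted by `σ` via a permutation `τ`.
For each orbit `A` of `τ`, the element `e_A = Σ_{j∈A} d_j` is a σ-fixed idempotent; the `e_A`
are pairwise orthogonal, sum to `1`, and none splits as a sum of two nonzero orthogonal
σ-fixed idempotents. -/
theorem stmt5 {R : Type*} [CommRing R] (σ : R →+* R) (m : ℕ) (d : Fin m → R)
    (hinj : Function.Injective d)
    (hne : ∀ j, d j ≠ 0)
    (hidem : ∀ j, d j * d j = d j)
    (horth : ∀ j l, j ≠ l → d j * d l = 0)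
    (hsum : ∑ j, d j = 1)
    (hprim : ∀ j, ¬ ∃ a b : R, a ≠ 0 ∧ b ≠ 0 ∧ a * a = a ∧ b * b = b ∧ a * b = 0 ∧
      d j = a + b)
    (τ : Equiv.Perm (Fin m)) (hτ : ∀ j, σ (d j) = d (τ j))
    (O : Finset (Finset (Fin m)))
    (hO : ∀ A : Finset (Fin m), A ∈ O ↔ ∃ j, ∀ l, l ∈ A ↔ τ.SameCycle j l) :
    (∀ A ∈ O, σ (∑ j ∈ A, d j) = ∑ j ∈ A, d j) ∧
    (∀ A ∈ O, (∑ j ∈ A, d j) * (∑ j ∈ A, d j) = ∑ j ∈ A, d j) ∧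
    (∀ A ∈ O, ∀ B ∈ O, A ≠ B → (∑ j ∈ A, d j) * (∑ j ∈ B, d j) = 0) ∧
    (∑ A ∈ O, ∑ j ∈ A, d j = 1) ∧
    (∀ A ∈ O, ¬ ∃ a b : R, a ≠ 0 ∧ b ≠ 0 ∧ a * a = a ∧ b * b = b ∧ a * b = 0 ∧
      σ a = a ∧ σ b = b ∧ ∑ j ∈ A, d j = a + b) := by
  have hdisj : ∀ A ∈ O, ∀ B ∈ O, A ≠ B → Disjoint A B := by
    intro A hA B hB hAB
    obtain ⟨j, hj⟩ := (hO A).1 hA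
    obtain ⟨k, hk⟩ := (hO B).1 hB
    rw [Finset.disjoint_left]
    intro x hxA hxB
    apply hAB
    ext l
    have h1 := (hj x).1 hxA
    have h2 := (hk x).1 hxB
    rw [hj, hk]
    exact ⟨fun h => h2.trans (h1.symm.trans h), fun h => h1.trans (h2.symm.trans h)⟩
  have hmul : ∀ A : Finset (Fin m), ∀ j ∈ A, d j * ∑ l ∈ A, d l = d j := by
    intro A j hj
    rw [Finset.mul_sum, Finset.sum_eq_single j, hidem]
    · intro l _ hl
      exact horth _ _ (Ne.symm hl)
    · intro h
      exact absurd hj h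
  refine ⟨?_, ?_, ?_, ?_, ?_⟩
  · intro A hA
    obtain ⟨j, hj⟩ := (hO A).1 hA
    rw [map_sum]
    refine Finset.sum_equiv τ ?_ ?_
    · intro i
      rw [hj, hj, Equiv.Perm.sameCycle_apply_right]
    · intro i _
      exact hτ i
  · intro A hA
    rw [Finset.sum_mul]
    exact Finset.sum_congr rfl (hmul A)
  · intro A hA B hB hAB
    rw [Finset.sum_mul_sum]
    refine Finset.sum_eq_zero fun i hi => Finset.sum_eq_zero fun k hk => horth _ _ ?_
    rintro rfl
    exact Finset.disjoint_left.1 (hdisj A hA B hB hAB) hi hk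
  · rw [← hsum]
    have hu : (Finset.univ : Finset (Fin m)) = O.biUnion id := by
      classical
      ext j
      simp only [Finset.mem_univ, Finset.mem_biUnion, id, true_iff]
      refine ⟨Finset.univ.filter (fun l => τ.SameCycle j l), (hO _).2 ⟨j, by simp⟩, ?_⟩
      simp [Equiv.Perm.SameCycle.refl]
    rw [hu, Finset.sum_biUnion]
    · rfl
    · intro A hA B hB hAB
      exact hdisj A hA B hB hAB
  · rintro A hA ⟨a, b, ha, hb, haa, hbb, hab, hsa, hsb, hs⟩
    obtain ⟨j, hj⟩ := (hO A).1 hA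
    have hjA : j ∈ A := (hj j).2 (Equiv.Perm.SameCycle.refl _ _)
    have key : ∀ c : R, σ c = c → (∑ l ∈ A, d l) * c = c → d j * c = 0 → c = 0 := by
      intro c hc hec h0
      have hp : ∀ n : ℕ, d ((τ ^ n) j) * c = 0 := by
        intro n
        induction n with
        | zero => simpa using h0
        | succ n ih =>
          have := congrArg σ ih
          rw [map_mul, hτ, hc, map_zero] at this
          rw [pow_succ', Equiv.Perm.mul_apply]
          exact this
      rw [← hec, Finset.sum_mul]
      refine Finset.sum_eq_zero fun l hl => ?_
      obtain ⟨n, rfl⟩ := ((hj l).1 hl).exists_nat_pow_eq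
      exact hp n
    have hd := hmul A j hjA
    rw [hs] at hd key
    refine hprim j ⟨d j * a, d j * b, ?_, ?_, ?_, ?_, ?_, ?_⟩
    · intro h
      exact ha (key a hsa (by linear_combination haa + hab) h)
    · intro h
      exact hb (key b hsb (by linear_combination hbb + hab) h)
    · rw [mul_mul_mul_comm, hidem, haa]
    · rw [mul_mul_mul_comm, hidem, hbb]
    · rw [mul_mul_mul_comm, hab, mul_zero]
    · rw [← mul_add, hd]
end

section
/- Let k be a field with a ring endomorphism σ_k : k → k, let K be a separable algebraic closure of k, and let σ_K : K → K be a ring endomorphism with σ_K(algebraMap k K λ) = algebraMap k K (σ_k λ) for all λ ∈ k. Then for every k-algebra automorphism τ of K there exists a unique k-algebra automorphism τ′ of K such that σ_K(τ′(x)) = τ(σ_K(x)) for all x ∈ K; moreover the resulting map τ ↦ τ′ is a group homomorphism from Gal(K/k) to itself that is continuous with respect to the Krull topology. -/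
theorem stmt6_aux {k K : Type*} [Field k] [Field K] [Algebra k K] [Normal k K]
    (σk : k →+* k) (σK : K →+* K)
    (hext : ∀ lam : k, σK (algebraMap k K lam) = algebraMap k K (σk lam))
    (τ : K ≃ₐ[k] K) (x : K) : ∃ y : K, σK y = τ (σK x) := by
  have hint : IsIntegral k x := Normal.isIntegral inferInstance x
  have hs : ((minpoly k x).map (algebraMap k K)).Splits := Normal.splits inferInstance x
  have h0 : (minpoly k x).map (algebraMap k K) ≠ 0 :=
    Polynomial.map_ne_zero (minpoly.ne_zero hint)
  have hcomp : σK.comp (algebraMap k K) = (algebraMap k K).comp σk := RingHom.ext hext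
  have e1 : (minpoly k x).eval₂ (σK.comp (algebraMap k K)) (σK x) = 0 := by
    rw [← Polynomial.hom_eval₂, ← Polynomial.aeval_def, minpoly.aeval, map_zero]
  have hcomp2 : (τ : K →+* K).comp (σK.comp (algebraMap k K)) = σK.comp (algebraMap k K) := by
    rw [hcomp]; ext a; simp
  have e2 : (minpoly k x).eval₂ (σK.comp (algebraMap k K)) (τ (σK x)) = 0 := by
    have := congrArg (τ : K →+* K) e1
    rw [Polynomial.hom_eval₂, hcomp2, map_zero] at this
    exact this
  have hr := hs.roots_map σK
  have hm : τ (σK x) ∈ (((minpoly k x).map (algebraMap k K)).map σK).roots := by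
    rw [Polynomial.mem_roots (Polynomial.map_ne_zero h0), Polynomial.IsRoot.def,
      Polynomial.map_map, Polynomial.eval_map]
    exact e2
  rw [hr, Multiset.mem_map] at hm
  obtain ⟨y, _, hy⟩ := hm
  exact ⟨y, hy⟩

/-- Let `K` be a separable algebraic closure of the difference field
`(k, σₖ)` and `σ_K : K → K` an extension of `σₖ`. For every `τ ∈ Gal(K/k)` there is a unique
`τ' ∈ Gal(K/k)` with `σ_K ∘ τ' = τ ∘ σ_K`, and `τ ↦ τ'` is a continuous group endomorphism
of `Gal(K/k)` for the Krull topology. -/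
theorem stmt6 {k K : Type*} [Field k] [Field K] [Algebra k K] [IsSepClosure k K]
    (σk : k →+* k) (σK : K →+* K)
    (hext : ∀ lam : k, σK (algebraMap k K lam) = algebraMap k K (σk lam)) :
    (∀ τ : K ≃ₐ[k] K, ∃! τ' : K ≃ₐ[k] K, ∀ x : K, σK (τ' x) = τ (σK x)) ∧
    ∃ Φ : (K ≃ₐ[k] K) →* (K ≃ₐ[k] K),
      Continuous Φ ∧ ∀ (τ : K ≃ₐ[k] K) (x : K), σK (Φ τ x) = τ (σK x) := by
  haveI : Algebra.IsSeparable k K := IsSepClosure.separable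
  haveI : IsGalois k K := inferInstance
  have hinj : Function.Injective σK := σK.injective
  choose f hf using stmt6_aux σk σK hext
  have hone : ∀ x, f 1 x = x := fun x => hinj (by rw [hf]; rfl)
  have hmul : ∀ a b x, f (a * b) x = f a (f b x) := fun a b x => hinj (by simp only [hf]; rfl)
  let g : (K ≃ₐ[k] K) → (K ≃ₐ[k] K) := fun τ =>
    { toFun := f τ
      invFun := f τ⁻¹
      left_inv := fun x => by rw [← hmul, inv_mul_cancel, hone]
      right_inv := fun x => by rw [← hmul, mul_inv_cancel, hone]
      map_mul' := fun x y => hinj (by simp only [hf, map_mul])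
      map_add' := fun x y => hinj (by simp only [hf, map_add])
      commutes' := fun a => hinj (by simp only [hf, hext, AlgEquiv.commutes]) }
  have hg : ∀ τ x, σK (g τ x) = τ (σK x) := hf
  refine ⟨fun τ => ⟨g τ, hg τ, fun τ' h => AlgEquiv.ext fun x => hinj (by rw [h, hg])⟩, ?_⟩
  let Φ : (K ≃ₐ[k] K) →* (K ≃ₐ[k] K) :=
    { toFun := g
      map_one' := AlgEquiv.ext hone
      map_mul' := fun a b => AlgEquiv.ext (hmul a b) }
  have hΦ : ∀ τ x, σK (Φ τ x) = τ (σK x) := hf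
  refine ⟨Φ, ?_, hΦ⟩
  apply continuous_of_continuousAt_one
  rw [ContinuousAt, map_one]
  intro A hA
  obtain ⟨E, hE, hEA⟩ := (krullTopology_mem_nhds_one_iff k K A).1 hA
  let b := Module.finBasis k E
  have hopen : (⋂ i, (MulAction.stabilizer (K ≃ₐ[k] K) (σK (b i : K)) : Set (K ≃ₐ[k] K))) ∈
      nhds (1 : K ≃ₐ[k] K) :=
    Filter.iInter_mem.2 fun i =>
      (stabilizer_isOpen_of_isIntegral (K := k) (σK (b i : K))).mem_nhds (one_mem _)
  rw [Filter.mem_map]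
  refine Filter.mem_of_superset hopen fun τ hτ => hEA ?_
  rw [Set.mem_iInter] at hτ
  have hb : (Φ τ).toLinearMap ∘ₗ E.val.toLinearMap = E.val.toLinearMap := by
    refine b.ext fun i => hinj ?_
    have := hτ i
    rw [SetLike.mem_coe, MulAction.mem_stabilizer_iff] at this
    exact (hΦ τ _).trans this
  rw [SetLike.mem_coe, IntermediateField.mem_fixingSubgroup_iff]
  intro x hx
  exact LinearMap.congr_fun hb ⟨x, hx⟩
end

section
/- Let k be a field with a ring endomorphism σ_k : k → k, let K be a separable algebraic closure of k, and let σ_K : K → K be a ring endomorphism with σ_K(algebraMap k K λ) = algebraMap k K (σ_k λ) for all λ ∈ k. Let T be a commutative k-algebra such that every element of T is a root of some monic separable polynomial with coefficients in k, and let α : T → K be a ring homomorphism satisfying α((algebraMap k T λ) · a) = (algebraMap k K (σ_k λ)) · α(a) for all λ ∈ k and a ∈ T. Then there exists a unique k-algebra homomorphism β : T → K such that σ_K(β(a)) = α(a) for all a ∈ T. -/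
/-- Let `K` be a separable algebraic closure of the difference field
`(k, σₖ)` with extension `σ_K` of `σₖ`, and let `T` be an ind-étale `k`-algebra (every
element is a root of a monic separable polynomial over `k`). Any ring homomorphism
`α : T → K` that is semilinear over `σₖ` factors uniquely as `α = σ_K ∘ β` for a `k`-algebra
homomorphism `β : T → K`. -/
theorem stmt7 {k K T : Type*} [Field k] [Field K] [Algebra k K] [IsSepClosure k K]
    (σk : k →+* k) (σK : K →+* K)
    (hext : ∀ lam : k, σK (algebraMap k K lam) = algebraMap k K (σk lam))
    [CommRing T] [Algebra k T]
    (hindetale : ∀ a : T, ∃ p : Polynomial k, p.Monic ∧ p.Separable ∧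
      Polynomial.aeval a p = 0)
    (α : T →+* K)
    (hα : ∀ (lam : k) (a : T), α (algebraMap k T lam * a) = algebraMap k K (σk lam) * α a) :
    ∃! β : T →ₐ[k] K, ∀ a : T, σK (β a) = α a := by
  have hinj : Function.Injective σK := σK.injective
  haveI : IsSepClosed K := IsSepClosure.sep_closed k
  have hα1 : ∀ lam : k, α (algebraMap k T lam) = σK (algebraMap k K lam) := by
    intro lam
    have := hα lam 1
    rw [mul_one, map_one, mul_one] at this
    rw [this, hext]
  have hex : ∀ a : T, ∃ x : K, σK x = α a := by
    intro a
    obtain ⟨p, hm, hs, hp⟩ := hindetale a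
    have hsp : (p.map (algebraMap k K)).Splits :=
      IsSepClosed.splits_of_separable _ hs.map
    have h1 : Polynomial.eval (α a) ((p.map (algebraMap k K)).map σK) = 0 := by
      have h2 : α.comp (algebraMap k T) = σK.comp (algebraMap k K) :=
        RingHom.ext hα1
      rw [Polynomial.map_map, ← h2, Polynomial.eval_map, ← Polynomial.hom_eval₂,
        ← Polynomial.aeval_def, hp, map_zero]
    have hne : (p.map (algebraMap k K)).map σK ≠ 0 := ((hm.map _).map _).ne_zero
    have hmem : α a ∈ ((p.map (algebraMap k K)).map σK).roots :=
      (Polynomial.mem_roots hne).2 h1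
    rw [hsp.roots_map σK] at hmem
    obtain ⟨x, _, hx⟩ := Multiset.mem_map.1 hmem
    exact ⟨x, hx⟩
  choose b hb using hex
  let β : T →ₐ[k] K :=
    { toFun := b
      map_one' := hinj (by rw [hb, map_one, map_one])
      map_mul' := fun x y => hinj (by rw [hb, map_mul, map_mul, hb, hb])
      map_zero' := hinj (by rw [hb, map_zero, map_zero])
      map_add' := fun x y => hinj (by rw [hb, map_add, map_add, hb, hb])
      commutes' := fun r => hinj (by rw [← hα1]; exact hb _) }
  refine ⟨β, hb, fun γ hγ => AlgHom.ext fun a => hinj ?_⟩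
  rw [hγ]
  exact (hb a).symm
end

section
/- Let k be a field with a ring endomorphism σ_k : k → k, let K be a separable algebraic closure of k, and let σ_K : K → K be a ring endomorphism with σ_K(algebraMap k K λ) = algebraMap k K (σ_k λ) for all λ ∈ k. Let R be a commutative k-algebra in which every element is a root of some monic separable polynomial over k, equipped with a ring endomorphism σ_R satisfying σ_R((algebraMap k R λ) · a) = (algebraMap k R (σ_k λ)) · σ_R(a) for all λ ∈ k, a ∈ R. Then: (1) for every k-algebra homomorphism ψ : R → K there is a unique k-algebra homomorphism σ(ψ) : R → K with σ_K(σ(ψ)(a)) = ψ(σ_R(a)) for all a ∈ R; and (2) if τ and τ′ are k-algebra automorphisms of K with σ_K ∘ τ′ = τ ∘ σ_K, then σ(τ ∘ ψ) = τ′ ∘ σ(ψ). -/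
/-- Let `K` be a separable algebraic closure of the difference field
`(k, σₖ)` with extension `σ_K` of `σₖ`, and let `R` be an ind-étale `k`-σ-algebra with
σₖ-semilinear endomorphism `σ_R`. Then (1) every `k`-algebra homomorphism `ψ : R → K` admits
a unique `k`-algebra homomorphism `σ(ψ) : R → K` with `σ_K ∘ σ(ψ) = ψ ∘ σ_R`; and (2) for
`τ, τ' ∈ Gal(K/k)` with `σ_K ∘ τ' = τ ∘ σ_K` one has `σ(τ ∘ ψ) = τ' ∘ σ(ψ)`. -/
theorem stmt8 {k K R : Type*} [Field k] [Field K] [Algebra k K] [IsSepClosure k K]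
    (σk : k →+* k) (σK : K →+* K)
    (hext : ∀ lam : k, σK (algebraMap k K lam) = algebraMap k K (σk lam))
    [CommRing R] [Algebra k R]
    (hindetale : ∀ a : R, ∃ p : Polynomial k, p.Monic ∧ p.Separable ∧
      Polynomial.aeval a p = 0)
    (σR : R →+* R)
    (hσR : ∀ (lam : k) (a : R), σR (algebraMap k R lam * a) = algebraMap k R (σk lam) * σR a) :
    (∀ ψ : R →ₐ[k] K, ∃! ψ' : R →ₐ[k] K, ∀ a : R, σK (ψ' a) = ψ (σR a)) ∧
    (∀ (ψ χ φ : R →ₐ[k] K) (τ τ' : K ≃ₐ[k] K),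
      (∀ x : K, σK (τ' x) = τ (σK x)) →
      (∀ a : R, σK (χ a) = ψ (σR a)) →
      (∀ a : R, σK (φ a) = τ (ψ (σR a))) →
      ∀ a : R, φ a = τ' (χ a)) := by
  have inj : Function.Injective σK := σK.injective
  have hsc : IsSepClosed K := IsSepClosure.sep_closed k
  have hR : ∀ lam : k, σR (algebraMap k R lam) = algebraMap k R (σk lam) := by
    intro lam
    simpa using hσR lam 1
  constructor
  · intro ψ
    have key : ∀ a : R, ∃ b : K, σK b = ψ (σR a) := by
      intro a
      obtain ⟨p, hm, hs, hp⟩ := hindetale a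
      have hsp : (p.map (algebraMap k K)).Splits := IsSepClosed.splits_codomain p hs
      have hcomp : ((ψ : R →+* K).comp σR).comp (algebraMap k R)
          = σK.comp (algebraMap k K) := by
        ext lam
        simp [hR, hext]
      have h0 : ((p.map (algebraMap k K)).map σK).eval (ψ (σR a)) = 0 := by
        have h1 : ((ψ : R →+* K).comp σR) (Polynomial.aeval a p) = 0 := by
          rw [hp, map_zero]
        rw [Polynomial.aeval_def, Polynomial.hom_eval₂, hcomp] at h1
        rw [Polynomial.map_map, Polynomial.eval_map]
        exact h1
      have hmem : ψ (σR a) ∈ ((p.map (algebraMap k K)).map σK).roots := by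
        rw [Polynomial.mem_roots (((hm.map _).map _).ne_zero)]
        exact h0
      rw [hsp.roots_map σK, Multiset.mem_map] at hmem
      obtain ⟨b, _, hb⟩ := hmem
      exact ⟨b, hb⟩
    choose f hf using key
    refine ⟨{ toFun := f, map_one' := ?_, map_mul' := ?_, map_zero' := ?_, map_add' := ?_,
              commutes' := ?_ }, ?_, ?_⟩
    · apply inj; simp [hf]
    · intro x y; apply inj; simp [hf]
    · apply inj; simp [hf]
    · intro x y; apply inj; simp [hf]
    · intro r; apply inj; simp [hf, hR, hext]
    · exact hf
    · intro g hg
      ext a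
      apply inj
      exact (hg a).trans (hf a).symm
  · intro ψ χ φ τ τ' h1 h2 h3 a
    apply inj
    rw [h3, h1, h2]
end

section
/- Let Γ be a group, let ι be a finite index type, and for each i ∈ ι let H_i be a group on which Γ acts by group automorphisms. Assume each H_i is Γ-simple and noncommutative, i.e. H_i is nontrivial and not abelian, and every normal subgroup of H_i that is stable under the Γ-action equals {1} or H_i. Let Γ act on the product ∏_{i∈ι} H_i componentwise, and let N be a normal subgroup of ∏_{i∈ι} H_i that is stable under the Γ-action. Then there exist subgroups N_i ≤ H_i with N_i ∈ {{1}, H_i} for every i such that N = ∏_{i∈ι} N_i. -/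
/-- (Analogue of Lemma 5.12.) Let `Γ` act by automorphisms on each of
finitely many noncommutative Γ-simple groups `Hᵢ`, and componentwise on `∏ᵢ Hᵢ`. Every
Γ-stable normal subgroup `N` of `∏ᵢ Hᵢ` is of the form `∏ᵢ Nᵢ` with `Nᵢ ∈ {1, Hᵢ}`. -/
theorem stmt13 {Γ : Type*} [Group Γ] {ι : Type*} [Finite ι]
    (H : ι → Type*) [∀ i, Group (H i)] [∀ i, MulDistribMulAction Γ (H i)]
    (hnontriv : ∀ i, Nontrivial (H i))
    (hnoncomm : ∀ i, ∃ a b : H i, a * b ≠ b * a)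
    (hsimple : ∀ i, ∀ K : Subgroup (H i), K.Normal →
      (∀ (γ : Γ), ∀ x ∈ K, γ • x ∈ K) → K = ⊥ ∨ K = ⊤)
    (N : Subgroup (∀ i, H i)) (hNnormal : N.Normal)
    (hNstable : ∀ (γ : Γ), ∀ x ∈ N, (fun i => γ • x i) ∈ N) :
    ∃ Ni : (i : ι) → Subgroup (H i), (∀ i, Ni i = ⊥ ∨ Ni i = ⊤) ∧
      N = Subgroup.pi Set.univ Ni := by
  classical
  have hcenter : ∀ i, Subgroup.center (H i) = ⊥ := by
    intro i
    rcases hsimple i (Subgroup.center (H i)) inferInstance (by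
      intro γ x hx
      rw [Subgroup.mem_center_iff] at hx ⊢
      intro g
      have h := congrArg (fun y => γ • y) (hx (γ⁻¹ • g))
      simpa [smul_mul'] using h) with h | h
    · exact h
    · exfalso
      obtain ⟨a, b, hab⟩ := hnoncomm i
      have hb : b ∈ Subgroup.center (H i) := by rw [h]; trivial
      exact hab (Subgroup.mem_center_iff.1 hb a)
  have hNi : ∀ i, N.comap (MonoidHom.mulSingle H i) = ⊥ ∨
      N.comap (MonoidHom.mulSingle H i) = ⊤ := by
    intro i
    apply hsimple i
    · exact hNnormal.comap _
    · intro γ x hx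
      rw [Subgroup.mem_comap] at hx ⊢
      convert hNstable γ _ hx using 1
      funext j
      by_cases hj : j = i
      · subst hj; simp
      · simp [hj]
  refine ⟨fun i => N.comap (MonoidHom.mulSingle H i), hNi, le_antisymm ?_ ?_⟩
  · intro x hx i _
    rcases hNi i with h | h
    · have hxc : x i ∈ Subgroup.center (H i) := by
        rw [Subgroup.mem_center_iff]
        intro g
        have h1 : MonoidHom.mulSingle H i (g * x i * g⁻¹ * (x i)⁻¹) ∈ N := by
          have h2 := N.mul_mem (hNnormal.conj_mem x hx (Pi.mulSingle i g)) (N.inv_mem hx)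
          convert h2 using 1
          funext j
          by_cases hj : j = i
          · subst hj; simp
          · simp [hj]
        have h3 : g * x i * g⁻¹ * (x i)⁻¹ ∈ N.comap (MonoidHom.mulSingle H i) := h1
        rw [h, Subgroup.mem_bot] at h3
        rw [mul_inv_eq_one, mul_inv_eq_iff_eq_mul] at h3
        exact h3
      rw [hcenter i, Subgroup.mem_bot] at hxc
      show x i ∈ N.comap (MonoidHom.mulSingle H i)
      rw [hxc]
      exact Subgroup.one_mem _
    · show x i ∈ N.comap (MonoidHom.mulSingle H i)
      rw [h]; trivial
  · intro x hx
    exact Subgroup.pi_mem_of_mulSingle_mem x (fun i => hx i (Set.mem_univ i))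
end

section
/- Let k be a field with a ring endomorphism σ_k : k → k, let A be a commutative k-algebra with a ring endomorphism σ_A satisfying σ_A((algebraMap k A λ) · a) = (algebraMap k A (σ_k λ)) · σ_A(a) for all λ ∈ k, a ∈ A, and let ε : A → k be a k-algebra homomorphism with ε(σ_A(a)) = σ_k(ε(a)) for all a ∈ A; set m = ker ε. Then the following are equivalent: (i) for every commutative k-algebra R (in the same universe as A) equipped with an injective ring endomorphism σ_R satisfying σ_R((algebraMap k R λ) · x) = (algebraMap k R (σ_k λ)) · σ_R(x), every k-algebra homomorphism ψ : A → R with ψ ∘ σ_A = σ_R ∘ ψ vanishes on m; (ii) for every f ∈ m there exists n ∈ ℕ with σ_A^n(f) = 0. Moreover, if (ii) holds and there is a finite subset B ⊆ A such that m is generated as an ideal by ⋃_{n∈ℕ} σ_A^n(B), then there exists n ∈ ℕ with σ_A^n(f) = 0 for all f ∈ m. -/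
universe u

/-- The ideal of elements killed by a power of `σ`. -/
def sigNilIdeal {A : Type*} [CommRing A] (σA : A →+* A) : Ideal A where
  carrier := {a | ∃ n : ℕ, (⇑σA)^[n] a = 0}
  zero_mem' := ⟨0, rfl⟩
  add_mem' := by
    rintro a b ⟨n, hn⟩ ⟨m, hm⟩
    refine ⟨n + m, ?_⟩
    have h1 : (⇑σA)^[n + m] a = 0 := by
      rw [add_comm, Function.iterate_add_apply, hn, iterate_map_zero]
    have h2 : (⇑σA)^[n + m] b = 0 := by
      rw [Function.iterate_add_apply, hm, iterate_map_zero]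
    rw [iterate_map_add, h1, h2, add_zero]
  smul_mem' := by
    rintro c a ⟨n, hn⟩
    refine ⟨n, ?_⟩
    rw [smul_eq_mul, iterate_map_mul, hn, mul_zero]

theorem mem_sigNilIdeal {A : Type*} [CommRing A] (σA : A →+* A) (a : A) :
    a ∈ sigNilIdeal σA ↔ ∃ n : ℕ, (⇑σA)^[n] a = 0 := Iff.rfl

theorem sigNilIdeal_map {A : Type*} [CommRing A] (σA : A →+* A) (a : A) :
    σA a ∈ sigNilIdeal σA ↔ a ∈ sigNilIdeal σA := by
  rw [mem_sigNilIdeal, mem_sigNilIdeal]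
  constructor
  · rintro ⟨n, hn⟩
    exact ⟨n + 1, by rw [Function.iterate_succ_apply, hn]⟩
  · rintro ⟨n, hn⟩
    exact ⟨n, by rw [← Function.iterate_succ_apply, Function.iterate_succ_apply', hn, map_zero]⟩

/-- (Lemma 6.3 of the paper.) For a `k`-σ-algebra `A` with compatible
character `ε : A → k` and augmentation ideal `m = ker ε`: every difference `k`-algebra
homomorphism from `A` to a σ-reduced `k`-σ-algebra kills `m` iff every element of `m` is
annihilated by some power of `σ`; and if moreover `m` is σ-generated by a finite set, then a
single power of `σ` annihilates all of `m`. -/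
theorem stmt14 {k : Type*} [Field k] (σk : k →+* k)
    {A : Type u} [CommRing A] [Algebra k A]
    (σA : A →+* A)
    (hσA : ∀ (lam : k) (a : A),
      σA (algebraMap k A lam * a) = algebraMap k A (σk lam) * σA a)
    (ε : A →ₐ[k] k) (hε : ∀ a : A, ε (σA a) = σk (ε a)) :
    ((∀ (R : Type u) [CommRing R] [Algebra k R] (σR : R →+* R),
        Function.Injective σR →
        (∀ (lam : k) (x : R),
          σR (algebraMap k R lam * x) = algebraMap k R (σk lam) * σR x) →
        ∀ ψ : A →ₐ[k] R, (∀ a : A, ψ (σA a) = σR (ψ a)) →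
          ∀ f ∈ RingHom.ker (ε : A →+* k), ψ f = 0) ↔
      (∀ f ∈ RingHom.ker (ε : A →+* k), ∃ n : ℕ, (⇑σA)^[n] f = 0)) ∧
    ((∀ f ∈ RingHom.ker (ε : A →+* k), ∃ n : ℕ, (⇑σA)^[n] f = 0) →
      (∃ B : Finset A, RingHom.ker (ε : A →+* k) =
        Ideal.span (⋃ n : ℕ, (⇑σA)^[n] '' (B : Set A))) →
      ∃ n : ℕ, ∀ f ∈ RingHom.ker (ε : A →+* k), (⇑σA)^[n] f = 0) := by
  refine ⟨⟨fun h f hf => ?_, ?_⟩, ?_⟩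
  · have hle : sigNilIdeal σA ≤ (sigNilIdeal σA).comap σA := fun a ha =>
      Ideal.mem_comap.2 ((sigNilIdeal_map σA a).2 ha)
    have key := h (A ⧸ sigNilIdeal σA) (Ideal.quotientMap (sigNilIdeal σA) σA hle)
      (Ideal.quotientMap_injective' (fun a ha => (sigNilIdeal_map σA a).1 (Ideal.mem_comap.1 ha)))
      (by
        intro lam x
        obtain ⟨a, rfl⟩ := Ideal.Quotient.mk_surjective x
        have e : ∀ c : k, algebraMap k (A ⧸ sigNilIdeal σA) c
          = Ideal.Quotient.mk (sigNilIdeal σA) (algebraMap k A c) := fun c => rfl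
        rw [e, e, ← map_mul, Ideal.quotientMap_mk, Ideal.quotientMap_mk, hσA, map_mul])
      (Ideal.Quotient.mkₐ k (sigNilIdeal σA)) (fun a => rfl) f hf
    exact Ideal.Quotient.eq_zero_iff_mem.1 key
  · intro h R _ _ σR hinj _ ψ hψ f hf
    obtain ⟨n, hn⟩ := h f hf
    have hs : Function.Semiconj ψ σA σR := hψ
    have h1 := (hs.iterate_right n) f
    rw [hn, map_zero] at h1
    apply hinj.iterate n
    rw [← h1, iterate_map_zero]
  · rintro h ⟨B, hB⟩
    have hsub : ∀ b ∈ B, b ∈ RingHom.ker (ε : A →+* k) := fun b hb => by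
      rw [hB]
      exact Ideal.subset_span (Set.mem_iUnion.2 ⟨0, b, hb, rfl⟩)
    have hex : ∀ b : A, ∃ n : ℕ, b ∈ B → (⇑σA)^[n] b = 0 := fun b => by
      by_cases hb : b ∈ B
      · obtain ⟨n, hn⟩ := h b (hsub b hb)
        exact ⟨n, fun _ => hn⟩
      · exact ⟨0, fun h => absurd h hb⟩
    choose N hN using hex
    refine ⟨B.sup N, fun f hf => ?_⟩
    rw [hB] at hf
    induction hf using Submodule.span_induction with
    | mem x hx =>
      obtain ⟨j, b, hb, rfl⟩ := Set.mem_iUnion.1 hx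
      obtain ⟨d, hd⟩ := Nat.exists_eq_add_of_le (Finset.le_sup (f := N) hb)
      rw [← Function.iterate_add_apply, hd,
        show N b + d + j = (d + j) + N b by omega, Function.iterate_add_apply, hN b hb,
        iterate_map_zero]
    | zero => exact iterate_map_zero _ _
    | add x y _ _ hx hy => rw [iterate_map_add, hx, hy, add_zero]
    | smul a x _ hx => rw [smul_eq_mul, iterate_map_mul, hx, mul_zero]
end

section
/- Let k be a field with a ring endomorphism σ_k : k → k, let A be a reduced commutative k-algebra that is finite-dimensional as a k-vector space, equipped with a ring endomorphism σ_A satisfying σ_A((algebraMap k A λ) · a) = (algebraMap k A (σ_k λ)) · σ_A(a) for all λ ∈ k, a ∈ A, and let ε : A → k be a k-algebra homomorphism with ε(σ_A(a)) = σ_k(ε(a)) for all a ∈ A. Assume Spec A is σ-connected, i.e. Spec A cannot be written as a disjoint union of two nonempty Zariski-closed subsets each stable under the map p ↦ σ_A⁻¹(p). Then there exists n ∈ ℕ such that σ_A^n(f) = 0 for every f ∈ ker ε. -/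
/-- (Lemma 6.6 of the paper.) A reduced finite `k`-σ-algebra `A` with
compatible character `ε` whose spectrum is σ-connected is σ-infinitesimal: some power of `σ`
annihilates the augmentation ideal `ker ε`. -/
theorem stmt15 {k A : Type*} [Field k] [CommRing A] [Algebra k A]
    [IsReduced A] [FiniteDimensional k A]
    (σk : k →+* k) (σA : A →+* A)
    (hσA : ∀ (lam : k) (a : A),
      σA (algebraMap k A lam * a) = algebraMap k A (σk lam) * σA a)
    (ε : A →ₐ[k] k) (hε : ∀ a : A, ε (σA a) = σk (ε a))
    (hconn : ¬ ∃ X Y : Set (PrimeSpectrum A),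
      X.Nonempty ∧ Y.Nonempty ∧ Disjoint X Y ∧ X ∪ Y = Set.univ ∧
      IsClosed X ∧ IsClosed Y ∧
      (∀ p ∈ X, PrimeSpectrum.comap σA p ∈ X) ∧
      (∀ p ∈ Y, PrimeSpectrum.comap σA p ∈ Y)) :
    ∃ n : ℕ, ∀ f ∈ RingHom.ker (ε : A →+* k), (⇑σA)^[n] f = 0 := by
  classical
  haveI : IsArtinianRing A := IsArtinianRing.of_finite k A
  let c : PrimeSpectrum A → PrimeSpectrum A := fun p => PrimeSpectrum.comap σA p
  let p0 : PrimeSpectrum A := ⟨RingHom.ker (ε : A →+* k), RingHom.ker_isPrime _⟩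
  have hp0 : c p0 = p0 := by
    apply PrimeSpectrum.ext
    ext a
    change (ε (σA a) = 0) ↔ (ε a = 0)
    rw [hε]
    exact map_eq_zero σk
  have hit : ∀ n : ℕ, c^[n] p0 = p0 := fun n => Function.iterate_fixed hp0 n
  have hall : ∀ p, ∃ n : ℕ, c^[n] p = p0 := by
    by_contra hne
    push Not at hne
    obtain ⟨q, hq⟩ := hne
    refine hconn ⟨{p | ∃ n : ℕ, c^[n] p = p0}, {p | ∃ n : ℕ, c^[n] p = p0}ᶜ, ⟨p0, 0, rfl⟩,
      ⟨q, ?_⟩, disjoint_compl_right, Set.union_compl_self _, isClosed_discrete _,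
      isClosed_discrete _, ?_, ?_⟩
    · rintro ⟨n, hn⟩
      exact hq n hn
    · rintro p ⟨n, hn⟩
      refine ⟨n, ?_⟩
      change c^[n] (c p) = p0
      rw [← Function.iterate_succ_apply, Function.iterate_succ_apply', hn, hp0]
    · rintro p hp ⟨n, hn⟩
      exact hp ⟨n + 1, hn⟩
  choose N hN using hall
  haveI : Finite (PrimeSpectrum A) := inferInstance
  haveI := Fintype.ofFinite (PrimeSpectrum A)
  have hmem : ∀ (n : ℕ) (p : PrimeSpectrum A) (f : A),
      f ∈ (c^[n] p).asIdeal → (⇑σA)^[n] f ∈ p.asIdeal := by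
    intro n
    induction n with
    | zero => intro p f h; exact h
    | succ n ih =>
      intro p f h
      rw [Function.iterate_succ_apply] at h
      rw [Function.iterate_succ_apply']
      exact ih (c p) f h
  refine ⟨Finset.univ.sup N, fun f hf => ?_⟩
  have hnil : (⇑σA)^[Finset.univ.sup N] f ∈ nilradical A := by
    rw [nilradical_eq_sInf, Ideal.mem_sInf]
    intro I hI
    have hle : N ⟨I, hI⟩ ≤ Finset.univ.sup N := Finset.le_sup (Finset.mem_univ _)
    refine hmem _ ⟨I, hI⟩ f ?_
    obtain ⟨m, hm⟩ := Nat.exists_eq_add_of_le' hle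
    rw [hm, Function.iterate_add_apply, hN, hit]
    exact hf
  rw [nilradical_eq_zero] at hnil
  exact hnil
end
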